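/- Let k, ℓ, t, q be positive integers with k ≥ 4. There exists a constant C = C(k,ℓ,t,q) such that for all sufficiently large n, the maximum number of edges in a k-uniform hypergraph on n vertices containing neither a copy of P^{(k)}_ℓ nor a copy of [K_{t+1,q}]^{(k)} is at most t·C(n−1,k−1) + C·n^{k−2+2/(k−1)}. -/

import Mathlib

open Finset

/-- The family `F` of k-sets contains a k-uniform linear path of length ℓ:
distinct members `P 0, …, P (ℓ-1)` with consecutive members meeting in exactly one
vertex and non-consecutive members disjoint. -/
def ContainsLinearPath (k ℓ : ℕ) {n : ℕ} (F : Finset (Finset (Fin n))) : Prop :=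
  ∃ P : Fin ℓ → Finset (Fin n), Function.Injective P ∧
    (∀ i, P i ∈ F) ∧ (∀ i, (P i).card = k) ∧
    (∀ i j : Fin ℓ, (i : ℕ) + 1 = (j : ℕ) → (P i ∩ P j).card = 1) ∧
    (∀ i j : Fin ℓ, (i : ℕ) + 1 < (j : ℕ) → P i ∩ P j = ∅)

/-- The family `F` of k-sets contains a copy of the k-blowup `H^{(k)}` of the graph `H`. -/
def ContainsBlowup (k : ℕ) {α : Type*} (H : SimpleGraph α) {n : ℕ}
    (F : Finset (Finset (Fin n))) : Prop :=
  ∃ φ : α → Fin n, Function.Injective φ ∧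
    ∃ E : Sym2 α → Finset (Fin n),
      (∀ e ∈ H.edgeSet, E e ∈ F ∧ (E e).card = k ∧ ∀ a : α, (a ∈ e ↔ φ a ∈ E e)) ∧
      (∀ e ∈ H.edgeSet, ∀ e' ∈ H.edgeSet, e ≠ e' →
        ∀ v, v ∈ E e → v ∈ E e' → ∃ a : α, a ∈ e ∧ a ∈ e' ∧ v = φ a)


/-- kernel -/
def Ker {n : ℕ} (s : ℕ) (F : Finset (Finset (Fin n))) (K : Finset (Fin n)) : Prop :=
  ∀ S : Finset (Fin n), S.card ≤ s → ∃ A ∈ F, K ⊆ A ∧ A ∩ S ⊆ K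

theorem Ker.mono {n s : ℕ} {F F' : Finset (Finset (Fin n))} {K : Finset (Fin n)}
    (h : F ⊆ F') (hK : Ker s F K) : Ker s F' K := by
  intro S hS
  obtain ⟨A, hA, h1, h2⟩ := hK S hS
  exact ⟨A, h hA, h1, h2⟩

theorem ker_self {n s : ℕ} {F : Finset (Finset (Fin n))} {A : Finset (Fin n)}
    (h : A ∈ F) : Ker s F A := fun _ _ => ⟨A, h, Subset.rfl, inter_subset_left⟩

theorem reach {n s k : ℕ} (hs : 1 ≤ s) {F : Finset (Finset (Fin n))}
    (hF : ∀ A ∈ F, A.card = k) (m : ℕ) : ∀ D : Finset (Fin n), k ≤ D.card + m →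
    ∃ R : Finset (Finset (Fin n)), R.card ≤ s ^ m ∧ (∀ K ∈ R, D ⊆ K ∧ Ker s F K) ∧
      ∀ K, Ker s F K → D ⊆ K → ∃ K0 ∈ R, K0 ⊆ K := by
  classical
  induction m with
  | zero =>
    intro D hD
    by_cases hk : Ker s F D
    · exact ⟨{D}, by simp, by simpa using hk, fun K _ h => ⟨D, by simp, h⟩⟩
    · refine ⟨∅, by simp, by simp, ?_⟩
      intro K hK hDK
      exfalso
      obtain ⟨A, hA, h1, -⟩ := hK ∅ (by simp)
      have h2 : D = A := eq_of_subset_of_card_le (hDK.trans h1) (by rw [hF A hA]; omega)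
      exact hk (h2 ▸ ker_self hA)
  | succ m ih =>
    intro D hD
    by_cases hk : Ker s F D
    · exact ⟨{D}, by simpa using Nat.one_le_pow _ _ hs, by simpa using hk,
        fun K _ h => ⟨D, by simp, h⟩⟩
    · unfold Ker at hk
      push Not at hk
      obtain ⟨S, hS, hSA⟩ := hk
      have ih' : ∀ z : Fin n, ∃ R : Finset (Finset (Fin n)), z ∉ D → (R.card ≤ s ^ m ∧
          (∀ K ∈ R, insert z D ⊆ K ∧ Ker s F K) ∧
          ∀ K, Ker s F K → insert z D ⊆ K → ∃ K0 ∈ R, K0 ⊆ K) := by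
        intro z
        by_cases hz : z ∈ D
        · exact ⟨∅, fun h => absurd hz h⟩
        · obtain ⟨R, hR⟩ := ih (insert z D) (by rw [card_insert_of_notMem hz]; omega)
          exact ⟨R, fun _ => hR⟩
      choose R hR using ih'
      refine ⟨(S \ D).biUnion R, ?_, ?_, ?_⟩
      · calc _ ≤ (S \ D).card * s ^ m := card_biUnion_le_card_mul _ _ _
              (fun z hz => (hR z (mem_sdiff.1 hz).2).1)
          _ ≤ s * s ^ m := Nat.mul_le_mul_right _ ((card_le_card sdiff_subset).trans hS)
          _ = s ^ (m + 1) := by ring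
      · intro K hK
        obtain ⟨z, hz, hK⟩ := mem_biUnion.1 hK
        have := (hR z (mem_sdiff.1 hz).2).2.1 K hK
        exact ⟨(subset_insert _ _).trans this.1, this.2⟩
      · intro K hK hDK
        obtain ⟨A, hA, h1, h2⟩ := hK S hS
        obtain ⟨z, hz1, hz2⟩ := not_subset.1 (hSA A hA (hDK.trans h1))
        obtain ⟨K0, h3, h4⟩ := (hR z hz2).2.2 K hK (insert_subset (h2 hz1) hDK)
        exact ⟨K0, mem_biUnion.2 ⟨z, mem_sdiff.2 ⟨(mem_inter.1 hz1).2, hz2⟩, h3⟩, h4⟩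

theorem card_up {n k : ℕ} (hn : 1 ≤ n) (W : Finset (Fin n)) {j : ℕ} (hj : k ≤ W.card + j) :
    ((powersetCard k (univ : Finset (Fin n))).filter (fun A => W ⊆ A)).card ≤ n ^ j := by
  calc _ ≤ (powersetCard (k - W.card) (univ : Finset (Fin n))).card := by
        apply card_le_card_of_injOn (fun A => A \ W)
        · intro A hA
          simp only [coe_filter, mem_powersetCard, subset_univ, true_and, Set.mem_ofPred_eq] at hA
          simp [mem_powersetCard, card_sdiff_of_subset hA.2, hA.1]
        · intro A hA A' hA' h
          simp only [coe_filter, mem_powersetCard, subset_univ, true_and, Set.mem_ofPred_eq] at hA hA'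
          simp only at h
          rw [← sdiff_union_of_subset hA.2, h, sdiff_union_of_subset hA'.2]
    _ = n.choose (k - W.card) := by simp
    _ ≤ n ^ (k - W.card) := Nat.choose_le_pow _ _
    _ ≤ n ^ j := Nat.pow_le_pow_right hn (by omega)

theorem clean {n s k : ℕ} (hn : 1 ≤ n) (hs : 1 ≤ s) (hk : 2 ≤ k) {F : Finset (Finset (Fin n))}
    (hF : ∀ A ∈ F, A.card = k) :
    ∃ G ⊆ F, (F \ G).card ≤ k * (s ^ k * s ^ k) * n ^ (k - 2) ∧
      ∀ A ∈ G, (∀ K K', K ⊆ A → K' ⊆ A → Ker s F K → Ker s F K' → Ker s F (K ∩ K')) ∧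
        (∀ D, D ⊆ A → D.card + 2 ≤ k → ∃ K, K ⊆ A ∧ K ≠ A ∧ D ⊆ K ∧ Ker s F K) := by
  classical
  have hr := fun D : Finset (Fin n) => reach hs hF k D (by omega)
  choose R hR1 hR2 hR3 using hr
  let bad : Finset (Fin n) → Prop := fun A => ∃ D, ∃ K ∈ R D, ∃ K' ∈ R D,
    K ∪ K' ⊆ A ∧ D.card + 2 ≤ (K ∪ K').card
  refine ⟨F.filter (fun A => ¬ bad A), filter_subset _ _, ?_, ?_⟩
  · have hsub : F \ F.filter (fun A => ¬ bad A) ⊆ (range (k - 1)).biUnion (fun d =>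
        (powersetCard d (univ : Finset (Fin n))).biUnion fun D =>
          ((R D ×ˢ R D).filter (fun p => D.card + 2 ≤ (p.1 ∪ p.2).card)).biUnion fun p =>
            (powersetCard k (univ : Finset (Fin n))).filter (fun A => p.1 ∪ p.2 ⊆ A)) := by
      intro A hA
      simp only [mem_sdiff, mem_filter, not_and, not_not] at hA
      obtain ⟨D, K, hK, K', hK', h1, h2⟩ := hA.2 hA.1
      have h3 := card_le_card h1
      rw [hF A hA.1] at h3
      simp only [mem_biUnion, mem_range, mem_powersetCard, mem_filter, mem_product]
      exact ⟨D.card, by omega, D, ⟨subset_univ _, rfl⟩, (K, K'), ⟨⟨hK, hK'⟩, h2⟩,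
        ⟨subset_univ _, hF A hA.1⟩, h1⟩
    refine (card_le_card hsub).trans ?_
    calc _ ≤ (range (k - 1)).card * ((s ^ k * s ^ k) * n ^ (k - 2)) := by
          apply card_biUnion_le_card_mul
          intro d hd
          rw [mem_range] at hd
          calc _ ≤ (powersetCard d (univ : Finset (Fin n))).card *
                  ((s ^ k * s ^ k) * n ^ (k - 2 - d)) := by
                apply card_biUnion_le_card_mul
                intro D hD
                rw [mem_powersetCard] at hD
                refine (card_biUnion_le_card_mul _ _ (n ^ (k - 2 - d)) ?_).trans ?_
                · intro p hp
                  rw [mem_filter] at hp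
                  exact card_up hn _ (by omega)
                · apply Nat.mul_le_mul_right
                  refine (card_filter_le _ _).trans ?_
                  rw [card_product]
                  exact Nat.mul_le_mul (hR1 D) (hR1 D)
            _ ≤ n ^ d * ((s ^ k * s ^ k) * n ^ (k - 2 - d)) := by
                apply Nat.mul_le_mul_right
                simpa using Nat.choose_le_pow n d
            _ = (s ^ k * s ^ k) * n ^ (d + (k - 2 - d)) := by rw [pow_add]; ring
            _ = _ := by congr 2; omega
      _ ≤ k * ((s ^ k * s ^ k) * n ^ (k - 2)) := by
          apply Nat.mul_le_mul_right; simp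
      _ = _ := by ring
  · intro A hA
    rw [mem_filter] at hA
    obtain ⟨hAF, hb⟩ := hA
    refine ⟨?_, ?_⟩
    · intro K K' hKA hKA' hK hK'
      by_contra hcon
      obtain ⟨K0, h1, h2⟩ := hR3 (K ∩ K') K hK inter_subset_left
      obtain ⟨K1, h3, h4⟩ := hR3 (K ∩ K') K' hK' inter_subset_right
      have e1 := hR2 _ K0 h1
      have e2 := hR2 _ K1 h3
      have n1 : K ∩ K' ≠ K0 := fun h => hcon (h ▸ e1.2)
      have n2 : K ∩ K' ≠ K1 := fun h => hcon (h ▸ e2.2)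
      have c1 : (K ∩ K').card < K0.card := card_lt_card (e1.1.ssubset_of_ne n1)
      have c2 : (K ∩ K').card < K1.card := card_lt_card (e2.1.ssubset_of_ne n2)
      have c3 : (K0 ∩ K1).card ≤ (K ∩ K').card := card_le_card (inter_subset_inter h2 h4)
      have c4 := card_union_add_card_inter K0 K1
      exact hb ⟨K ∩ K', K0, h1, K1, h3, union_subset (h2.trans hKA) (h4.trans hKA'), by omega⟩
    · intro D hDA hDk
      obtain ⟨K0, h1, h2⟩ := hR3 D A (ker_self hAF) hDA
      refine ⟨K0, h2, ?_, hR2 _ K0 h1⟩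
      intro h
      exact hb ⟨D, K0, h1, K0, h1, by simpa using h2, by rw [union_self, h, hF A hAF]; exact hDk⟩

theorem struct {n s k : ℕ} (hk : 4 ≤ k) {F : Finset (Finset (Fin n))} {A : Finset (Fin n)}
    (hA : A ∈ F) (hAk : A.card = k)
    (hI : ∀ K K', K ⊆ A → K' ⊆ A → Ker s F K → Ker s F K' → Ker s F (K ∩ K'))
    (hC : ∀ D, D ⊆ A → D.card + 2 ≤ k → ∃ K, K ⊆ A ∧ K ≠ A ∧ D ⊆ K ∧ Ker s F K)
    (hS : ¬ ∃ c ∈ A, ∀ y ∈ A, y ≠ c → Ker s F {c, y}) (x : Fin n) :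
    ∃ y ∈ A, y ≠ x ∧ Ker s F {y} := by
  classical
  -- separation lemma
  have sep : ∀ W ⊆ A, (∀ u ∈ A, u ∉ W → ∃ K, K ⊆ A ∧ W ⊆ K ∧ u ∉ K ∧ Ker s F K) → Ker s F W := by
    intro W hW h
    have : ∀ T : Finset (Fin n), T ⊆ A → (∀ u ∈ T, u ∉ W) →
        ∃ K, K ⊆ A ∧ W ⊆ K ∧ (∀ u ∈ T, u ∉ K) ∧ Ker s F K := by
      intro T
      induction T using Finset.induction_on with
      | empty => exact fun _ _ => ⟨A, Subset.rfl, hW, by simp, ker_self hA⟩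
      | insert a T _ ih =>
        intro hT hTW
        rw [insert_subset_iff] at hT
        obtain ⟨K, k1, k2, k3, k4⟩ := ih hT.2 (fun u hu => hTW u (mem_insert_of_mem hu))
        obtain ⟨K', l1, l2, l3, l4⟩ := h a hT.1 (hTW a (mem_insert_self _ _))
        refine ⟨K ∩ K', inter_subset_left.trans k1, subset_inter k2 l2, ?_, hI _ _ k1 l1 k4 l4⟩
        intro u hu
        rcases mem_insert.1 hu with rfl | hu
        · exact fun h => l3 (mem_inter.1 h).2
        · exact fun h => k3 u hu (mem_inter.1 h).1
    obtain ⟨K, k1, k2, k3, k4⟩ := this (A \ W) sdiff_subset (fun u hu => (mem_sdiff.1 hu).2)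
    have : K = W := by
      apply Subset.antisymm _ k2
      intro u hu
      by_contra hc
      exact k3 u (mem_sdiff.2 ⟨k1 hu, hc⟩) hu
    exact this ▸ k4
  have pair : ∀ u ∈ A, ∀ v ∈ A, u ≠ v → ¬ Ker s F (A.erase v) →
      ∃ K, K ⊆ A ∧ (A.erase u).erase v ⊆ K ∧ u ∉ K ∧ Ker s F K := by
    intro u hu v hv huv hnv
    obtain ⟨K, k1, k2, k3, k4⟩ := hC ((A.erase u).erase v)
      ((erase_subset _ _).trans (erase_subset _ _)) (by
        rw [card_erase_of_mem (mem_erase.2 ⟨huv.symm, hv⟩), card_erase_of_mem hu]; omega)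
    refine ⟨K, k1, k3, ?_, k4⟩
    intro huK
    apply hnv
    have hvK : v ∉ K := by
      intro hvK
      apply k2
      apply Subset.antisymm k1
      intro w hw
      by_cases h1 : w = u
      · exact h1 ▸ huK
      by_cases h2 : w = v
      · exact h2 ▸ hvK
      exact k3 (by simp [h1, h2, hw])
    have : K = A.erase v := by
      apply Subset.antisymm
      · intro w hw
        exact mem_erase.2 ⟨fun h => hvK (h ▸ hw), k1 hw⟩
      · intro w hw
        rw [mem_erase] at hw
        by_cases h1 : w = u
        · exact h1 ▸ huK
        exact k3 (by simp [h1, hw])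
    exact this ▸ k4
  have hU : ∃ u ∈ A, ∃ v ∈ A, u ≠ v ∧ ¬ Ker s F (A.erase u) ∧ ¬ Ker s F (A.erase v) := by
    by_contra hcon
    push Not at hcon
    apply hS
    have : ∃ c ∈ A, ∀ v ∈ A, c ≠ v → Ker s F (A.erase v) := by
      by_cases h : ∃ u ∈ A, ¬ Ker s F (A.erase u)
      · obtain ⟨u, hu, h⟩ := h
        exact ⟨u, hu, fun v hv huv => hcon u hu v hv huv h⟩
      · push Not at h
        obtain ⟨c, hc⟩ : A.Nonempty := by rw [← card_pos]; omega
        exact ⟨c, hc, fun v hv _ => h v hv⟩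
    obtain ⟨c, hc, h⟩ := this
    refine ⟨c, hc, fun y hy hyc => sep _ (by simp [insert_subset_iff, hc, hy]) ?_⟩
    intro u hu hu'
    simp only [mem_insert, mem_singleton, not_or] at hu'
    exact ⟨A.erase u, erase_subset _ _, by
      simp [insert_subset_iff, hc, hy, Ne.symm hu'.1, Ne.symm hu'.2], by simp, h u hu (Ne.symm hu'.1)⟩
  obtain ⟨u1, hu1, u2, hu2, hne, hk1, hk2⟩ := hU
  obtain ⟨y, hy⟩ : (A \ {x, u1, u2}).Nonempty := by
    rw [← card_pos]
    have := le_card_sdiff {x, u1, u2} A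
    have : ({x, u1, u2} : Finset (Fin n)).card ≤ 3 := card_le_three
    omega
  simp only [mem_sdiff, mem_insert, mem_singleton, not_or] at hy
  obtain ⟨hyA, hyx, hy1, hy2⟩ := hy
  refine ⟨y, hyA, hyx, sep _ (by simpa using hyA) ?_⟩
  intro u hu huy
  rw [mem_singleton] at huy
  by_cases h : u = u1
  · obtain ⟨K, l1, l2, l3, l4⟩ := pair u hu u2 hu2 (h ▸ hne) hk2
    exact ⟨K, l1, singleton_subset_iff.2 (l2 (by simp [hyA, hy2, Ne.symm huy])), l3, l4⟩
  · obtain ⟨K, l1, l2, l3, l4⟩ := pair u hu u1 hu1 h hk1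
    exact ⟨K, l1, singleton_subset_iff.2 (l2 (by simp [hyA, hy1, Ne.symm huy])), l3, l4⟩

theorem path_build {n s k : ℕ} (hn : 1 ≤ n) (hs : 1 ≤ s) (hk : 4 ≤ k)
    {B : Finset (Finset (Fin n))} (hB : ∀ A ∈ B, A.card = k)
    (hS : ∀ A ∈ B, ¬ ∃ c ∈ A, ∀ y ∈ A, y ≠ c → Ker s B {c, y}) (m : ℕ) :
    ∃ G ⊆ B, (B \ G).card ≤ m * (k * (s ^ k * s ^ k) * n ^ (k - 2)) ∧
      ∀ A ∈ G, ∀ x ∈ A, ∀ S : Finset (Fin n), S.card + k * m ≤ s →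
        ∃ P : ℕ → Finset (Fin n), P 0 = A ∧ (∀ i ≤ m, P i ∈ B) ∧
          (∀ i < m, (P i ∩ P (i + 1)).card = 1) ∧
          (∀ i j, i + 1 < j → j ≤ m → P i ∩ P j = ∅) ∧
          (∀ i < m, x ∉ P (i + 1)) ∧ (∀ i < m, P (i + 1) ∩ (S \ A) = ∅) := by
  classical
  induction m with
  | zero =>
    refine ⟨B, Subset.rfl, by simp, ?_⟩
    intro A hA x hx S hS
    refine ⟨fun _ => A, rfl, fun _ _ => hA, ?_, ?_, ?_, ?_⟩
    all_goals (intros; omega)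
  | succ m ih =>
    obtain ⟨B1, hB1, hc1, ih⟩ := ih
    obtain ⟨G, hG, hc2, hGood⟩ := clean (k := k) hn hs (by omega) (fun A hA => hB A (hB1 hA))
    refine ⟨G, hG.trans hB1, ?_, ?_⟩
    · have : B \ G ⊆ (B \ B1) ∪ (B1 \ G) := by
        intro A; simp only [mem_sdiff, mem_union]; tauto
      have := (card_le_card this).trans (card_union_le _ _)
      rw [add_mul, one_mul]
      omega
    · intro A hA x hx S hSs
      have hAB := hB1 (hG hA)
      obtain ⟨y, hyA, hyx, hyK⟩ := struct hk (hG hA) (hB A hAB) (hGood A hA).1 (hGood A hA).2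
        (fun ⟨c, hc, h⟩ => hS A hAB ⟨c, hc, fun y hy hyc => (h y hy hyc).mono hB1⟩) x
      have hcard : (S ∪ A).card + k * m ≤ s := by
        have := card_union_le S A
        rw [hB A hAB] at this
        rw [mul_add] at hSs
        omega
      obtain ⟨A', hA', h1, h2⟩ := hyK (S ∪ A) (by omega)
      rw [singleton_subset_iff] at h1
      obtain ⟨P, p0, p1, p2, p3, p4, p5⟩ := ih A' hA' y h1 (S ∪ A) hcard
      have hA'y : ∀ v ∈ A', v ∈ S ∪ A → v = y := fun v hv hv' =>
        mem_singleton.1 (h2 (mem_inter.2 ⟨hv, hv'⟩))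
      have p5' : ∀ i < m, ∀ v ∈ P (i + 1), v ∈ S ∪ A → v ∈ A' := by
        intro i hi v hv hvS
        by_contra hc
        have : v ∈ P (i + 1) ∩ ((S ∪ A) \ A') := mem_inter.2 ⟨hv, mem_sdiff.2 ⟨hvS, hc⟩⟩
        rw [p5 i hi] at this
        simp at this
      have key : ∀ i ≤ m, ∀ v ∈ P i, v ∈ S ∪ A → v = y := by
        intro i hi v hv hvS
        rcases i with _ | i
        · exact hA'y v (p0 ▸ hv) hvS
        · exact hA'y v (p5' i (by omega) v hv hvS) hvS
      have key2 : ∀ i < m, ∀ v ∈ P (i + 1), v ∉ S ∪ A := by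
        intro i hi v hv hvS
        have := key (i + 1) (by omega) v hv hvS
        exact p4 i hi (this ▸ hv)
      refine ⟨fun i => match i with | 0 => A | i + 1 => P i, rfl, ?_, ?_, ?_, ?_, ?_⟩
      · intro i hi
        rcases i with _ | i
        · exact hAB
        · exact p1 i (by omega)
      · intro i hi
        rcases i with _ | i
        · simp only [p0]
          rw [card_eq_one]
          refine ⟨y, ?_⟩
          ext v
          simp only [mem_inter, mem_singleton]
          constructor
          · exact fun h => hA'y v h.2 (mem_union_right _ h.1)
          · rintro rfl; exact ⟨hyA, h1⟩
        · exact p2 i (by omega)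
      · intro i j hij hj
        rcases j with _ | _ | j
        · omega
        · omega
        rcases i with _ | i
        · rw [eq_empty_iff_forall_notMem]
          intro v hv
          rw [mem_inter] at hv
          exact key2 j (by omega) v hv.2 (mem_union_right _ hv.1)
        · exact p3 i (j + 1) (by omega) (by omega)
      · intro i hi hxi
        exact hyx (key i (by omega) x hxi (mem_union_right _ hx)).symm
      · intro i hi
        rw [eq_empty_iff_forall_notMem]
        intro v hv
        simp only [mem_inter, mem_sdiff] at hv
        have := key i (by omega) v hv.1 (mem_union_left _ hv.2.1)
        exact hv.2.2 (this ▸ hyA)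

theorem nonstar_small {n s k ℓ : ℕ} (hn : 1 ≤ n) (hs : 1 ≤ s) (hk : 4 ≤ k) (hsl : k * ℓ ≤ s)
    {F B : Finset (Finset (Fin n))} (hF : ∀ A ∈ F, A.card = k) (hBF : B ⊆ F)
    (hS : ∀ A ∈ B, ¬ ∃ c ∈ A, ∀ y ∈ A, y ≠ c → Ker s F {c, y})
    (hP : ¬ ContainsLinearPath k ℓ F) :
    B.card ≤ ℓ * (k * (s ^ k * s ^ k) * n ^ (k - 2)) := by
  classical
  obtain ⟨G, hG, hc, h⟩ := path_build hn hs hk (fun A hA => hF A (hBF hA))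
    (fun A hA ⟨c, hc, h⟩ => hS A hA ⟨c, hc, fun y hy hyc => (h y hy hyc).mono hBF⟩) ℓ
  rcases G.eq_empty_or_nonempty with rfl | ⟨A, hA⟩
  · simpa using hc
  exfalso
  apply hP
  obtain ⟨x, hx⟩ : A.Nonempty := by
    rw [← card_pos, hF A (hBF (hG hA))]; omega
  obtain ⟨P, -, p1, p2, p3, -, -⟩ := h A hA x hx ∅ (by simpa using hsl)
  have hcard : ∀ i ≤ ℓ, (P i).card = k := fun i hi => hF _ (hBF (p1 i hi))
  have hne : ∀ i j, i < j → j ≤ ℓ → P i ≠ P j := by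
    intro i j hij hj he
    have hci := hcard i (by omega)
    rcases Nat.lt_or_ge (i + 1) j with h1 | h1
    · have := p3 i j h1 hj
      rw [← he, inter_self] at this
      rw [this] at hci
      simp at hci; omega
    · have hj' : j = i + 1 := by omega
      subst hj'
      have := p2 i (by omega)
      rw [← he, inter_self] at this
      omega
  refine ⟨fun i => P i, ?_, ?_, ?_, ?_, ?_⟩
  · intro i j hij
    by_contra hc
    rcases lt_or_gt_of_ne (fun h => hc (Fin.ext h) : (i : ℕ) ≠ j) with h1 | h1
    · exact hne i j h1 (by omega) hij
    · exact hne j i h1 (by omega) hij.symm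
  · exact fun i => hBF (p1 i (by omega))
  · exact fun i => hcard i (by omega)
  · intro i j hij
    have := p2 i (by omega)
    rwa [hij] at this
  · intro i j hij
    exact p3 i j hij (by omega)

theorem greedy {n s k : ℕ} {ι : Type*} [DecidableEq ι] {F : Finset (Finset (Fin n))}
    (hF : ∀ A ∈ F, A.card = k) (D : ι → Finset (Fin n)) (S0 : Finset (Fin n)) (T : Finset ι)
    (hD : ∀ i ∈ T, Ker s F (D i)) (hDS : ∀ i ∈ T, D i ⊆ S0) (h : S0.card + k * T.card ≤ s) :
    ∃ E : ι → Finset (Fin n), ∀ i ∈ T, E i ∈ F ∧ D i ⊆ E i ∧ E i ∩ S0 ⊆ D i ∧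
      ∀ j ∈ T, j ≠ i → E i ∩ E j ⊆ D i := by
  induction T using Finset.induction_on with
  | empty => exact ⟨fun _ => ∅, by simp⟩
  | insert a T ha ih =>
    rw [card_insert_of_notMem ha, mul_add] at h
    obtain ⟨E, hE⟩ := ih (fun i hi => hD i (mem_insert_of_mem hi))
      (fun i hi => hDS i (mem_insert_of_mem hi)) (by omega)
    have hcard : (S0 ∪ T.biUnion E).card ≤ s := by
      have h1 := card_union_le S0 (T.biUnion E)
      have h2 : (T.biUnion E).card ≤ T.card * k :=
        card_biUnion_le_card_mul _ _ _ (fun i hi => (hF _ (hE i hi).1).le)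
      rw [mul_comm] at h2
      omega
    obtain ⟨A, hA, h1, h2⟩ := hD a (mem_insert_self _ _) _ hcard
    have key : ∀ i ∈ T, ∀ v ∈ A, v ∈ E i → v ∈ D a := fun i hi v hv hv' =>
      h2 (mem_inter.2 ⟨hv, mem_union_right _ (mem_biUnion.2 ⟨i, hi, hv'⟩)⟩)
    refine ⟨Function.update E a A, ?_⟩
    intro i hi0
    rcases mem_insert.1 hi0 with rfl | hi
    · rw [Function.update_self]
      refine ⟨hA, h1, (inter_subset_inter_left subset_union_left).trans h2, ?_⟩
      intro j hj hji
      rw [Function.update_of_ne hji]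
      intro v hv
      rw [mem_inter] at hv
      exact key j (mem_of_mem_insert_of_ne hj hji) v hv.1 hv.2
    · have hia : i ≠ a := fun h => ha (h ▸ hi)
      rw [Function.update_of_ne hia]
      obtain ⟨e1, e2, e3, e4⟩ := hE i hi
      refine ⟨e1, e2, e3, ?_⟩
      intro j hj0 hji
      rcases mem_insert.1 hj0 with rfl | hj
      · rw [Function.update_self]
        intro v hv
        rw [mem_inter] at hv
        exact e3 (mem_inter.2 ⟨hv.1, hDS j (mem_insert_self _ _) (key i hi v hv.2 hv.1)⟩)
      · rw [Function.update_of_ne (show j ≠ a from fun h => ha (h ▸ hj))]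
        exact e4 j hj hji

theorem blowup_of_ker {n s k : ℕ} {α : Type*} [Fintype α] [DecidableEq α] (H : SimpleGraph α)
    {F : Finset (Finset (Fin n))} (hF : ∀ A ∈ F, A.card = k)
    (hs : Fintype.card α + k * Fintype.card (Sym2 α) ≤ s)
    (φ : α → Fin n) (hφ : Function.Injective φ)
    (h : ∀ a b, H.Adj a b → Ker s F {φ a, φ b}) : ContainsBlowup k H F := by
  classical
  have hmem : ∀ (e : Sym2 α) (v : Fin n), v ∈ (univ.filter (fun a => a ∈ e)).image φ ↔
      ∃ a ∈ e, φ a = v := by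
    intro e v; simp
  obtain ⟨E, hE⟩ := greedy (s := s) hF (fun e : Sym2 α => (univ.filter (fun a => a ∈ e)).image φ)
    (univ.image φ) (univ.filter (fun e => e ∈ H.edgeSet)) (by
      intro e he
      rw [mem_filter] at he
      induction e with | _ a b =>
      have := h a b he.2
      convert this using 1
      ext v
      rw [hmem]
      simp [eq_comm]) (by
      intro e he
      exact image_subset_image (subset_univ _)) (by
      have h1 : (univ.image φ).card ≤ Fintype.card α := card_image_le
      have h2 : (univ.filter (fun e => e ∈ H.edgeSet)).card ≤ Fintype.card (Sym2 α) :=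
        card_le_univ _
      have := Nat.mul_le_mul_left k h2
      omega)
  have aux : ∀ e ∈ H.edgeSet, ∀ a, φ a ∈ E e → a ∈ e := by
    intro e he a ha
    have := (hE e (by simpa using he)).2.2.1 (mem_inter.2 ⟨ha, mem_image_of_mem _ (mem_univ a)⟩)
    rw [hmem] at this
    obtain ⟨b, hb, hba⟩ := this
    exact hφ hba ▸ hb
  refine ⟨φ, hφ, E, ?_, ?_⟩
  · intro e he
    obtain ⟨e1, e2, e3, e4⟩ := hE e (by simpa using he)
    refine ⟨e1, hF _ e1, fun a => ⟨fun ha => e2 ((hmem _ _).2 ⟨a, ha, rfl⟩), aux e he a⟩⟩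
  · intro e he e' he' hne v hv hv'
    obtain ⟨e1, e2, e3, e4⟩ := hE e (by simpa using he)
    have := e4 e' (by simpa using he') hne.symm (mem_inter.2 ⟨hv, hv'⟩)
    rw [hmem] at this
    obtain ⟨a, ha, rfl⟩ := this
    exact ⟨a, ha, aux e' he' a hv', rfl⟩

theorem path_of_ker {n s k ℓ : ℕ} (hk : 4 ≤ k)
    {F : Finset (Finset (Fin n))} (hF : ∀ A ∈ F, A.card = k)
    (hs : (ℓ + 1) + k * ℓ ≤ s) (v : ℕ → Fin n)
    (hv : ∀ i ≤ ℓ, ∀ j ≤ ℓ, v i = v j → i = j)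
    (h : ∀ i < ℓ, Ker s F {v i, v (i + 1)}) : ContainsLinearPath k ℓ F := by
  classical
  obtain ⟨E, hE⟩ := greedy (s := s) hF (fun i : Fin ℓ => {v i, v (i + 1)})
    ((range (ℓ + 1)).image v) univ (fun i _ => h i i.2) (by
      intro i _
      have := i.2
      simp only [insert_subset_iff, singleton_subset_iff, mem_image, mem_range]
      exact ⟨⟨i, by omega, rfl⟩, ⟨i + 1, by omega, rfl⟩⟩) (by
      have h1 : ((range (ℓ + 1)).image v).card ≤ (range (ℓ + 1)).card := card_image_le
      rw [card_range] at h1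
      simp only [card_univ, Fintype.card_fin]
      omega)
  have hint : ∀ i j : Fin ℓ, i ≠ j → ∀ w ∈ E i, w ∈ E j →
      (w = v i ∨ w = v (i + 1)) ∧ (w = v j ∨ w = v (j + 1)) := by
    intro i j hij w hi hj
    have a1 := (hE i (mem_univ _)).2.2.2 j (mem_univ _) hij.symm (mem_inter.2 ⟨hi, hj⟩)
    have a2 := (hE j (mem_univ _)).2.2.2 i (mem_univ _) hij (mem_inter.2 ⟨hj, hi⟩)
    simpa using And.intro a1 a2
  have hcons : ∀ i j : Fin ℓ, (i : ℕ) + 1 = j → (E i ∩ E j).card = 1 := by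
    intro i j hij
    rw [card_eq_one]
    refine ⟨v j, ?_⟩
    ext w
    rw [mem_inter, mem_singleton]
    have hi := i.2
    have hj := j.2
    constructor
    · rintro ⟨h1, h2⟩
      obtain ⟨b1, b2⟩ := hint i j (fun h => by subst h; omega) w h1 h2
      rw [hij] at b1
      rcases b1 with b1 | b1
      · rcases b2 with b2 | b2
        · exact b2
        · have := hv i (by omega) (j + 1) (by omega) (b1.symm.trans b2)
          omega
      · exact b1
    · rintro rfl
      refine ⟨(hE i (mem_univ _)).2.1 (by simp [hij]), (hE j (mem_univ _)).2.1 (by simp)⟩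
  have hnon : ∀ i j : Fin ℓ, (i : ℕ) + 1 < j → E i ∩ E j = ∅ := by
    intro i j hij
    rw [eq_empty_iff_forall_notMem]
    intro w hw
    rw [mem_inter] at hw
    have hi := i.2
    have hj := j.2
    obtain ⟨b1, b2⟩ := hint i j (fun h => by subst h; omega) w hw.1 hw.2
    rcases b1 with b1 | b1 <;> rcases b2 with b2 | b2 <;>
      · have := hv _ (by omega) _ (by omega) (b1.symm.trans b2)
        omega
  have hcard : ∀ i, (E i).card = k := fun i => hF _ (hE i (mem_univ _)).1
  have hlt : ∀ i j : Fin ℓ, (i : ℕ) < j → E i ≠ E j := by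
    intro i j hij he
    have hci := hcard i
    rcases Nat.lt_or_ge ((i : ℕ) + 1) j with h1 | h1
    · have := hnon i j h1
      rw [← he, inter_self] at this
      rw [this] at hci
      simp at hci; omega
    · have := hcons i j (by omega)
      rw [← he, inter_self] at this
      omega
  refine ⟨E, ?_, fun i => (hE i (mem_univ _)).1, hcard, hcons, hnon⟩
  intro i j hij
  by_contra hc
  rcases lt_or_gt_of_ne (fun h => hc (Fin.ext h) : (i : ℕ) ≠ j) with h1 | h1
  · exact hlt i j h1 hij
  · exact hlt j i h1 hij.symm

theorem low_degree {n ℓ : ℕ} (Adj : Fin n → Fin n → Prop) (hsymm : ∀ x y, Adj x y → Adj y x)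
    (hno : ¬ ∃ v : ℕ → Fin n, (∀ i ≤ ℓ, ∀ j ≤ ℓ, v i = v j → i = j) ∧
      ∀ i < ℓ, Adj (v i) (v (i + 1)))
    (S : Finset (Fin n)) (hS : S.Nonempty) :
    ∃ v ∈ S, ∃ N : Finset (Fin n), N.card ≤ ℓ ∧ ∀ u ∈ S, Adj v u → u ∈ N := by
  classical
  by_contra hcon
  push Not at hcon
  have hdeg : ∀ v ∈ S, ℓ < (S.filter (Adj v)).card := by
    intro v hv
    by_contra hc
    obtain ⟨u, hu, h1, h2⟩ := hcon v hv (S.filter (Adj v)) (by omega)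
    exact h2 (mem_filter.2 ⟨hu, h1⟩)
  have build : ∀ m ≤ ℓ, ∃ v : ℕ → Fin n, (∀ i ≤ m, v i ∈ S) ∧
      (∀ i ≤ m, ∀ j ≤ m, v i = v j → i = j) ∧ ∀ i < m, Adj (v i) (v (i + 1)) := by
    intro m
    induction m with
    | zero =>
      intro _
      obtain ⟨x, hx⟩ := hS
      exact ⟨fun _ => x, fun _ _ => hx, by intros; omega, by intros; omega⟩
    | succ m ih =>
      intro hm
      obtain ⟨v, v1, v2, v3⟩ := ih (by omega)
      obtain ⟨w, hw⟩ : (S.filter (Adj (v 0)) \ (range (m + 1)).image v).Nonempty := by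
        rw [← card_pos]
        have h1 := le_card_sdiff ((range (m + 1)).image v) (S.filter (Adj (v 0)))
        have h2 := hdeg (v 0) (v1 0 (by omega))
        have h3 : ((range (m + 1)).image v).card ≤ (range (m + 1)).card := card_image_le
        rw [card_range] at h3
        omega
      simp only [mem_sdiff, mem_filter, mem_image, mem_range, not_exists, not_and] at hw
      obtain ⟨⟨w1, w2⟩, w3⟩ := hw
      refine ⟨fun i => match i with | 0 => w | i + 1 => v i, ?_, ?_, ?_⟩
      · intro i hi
        rcases i with _ | i
        · exact w1
        · exact v1 i (by omega)
      · intro i hi j hj hij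
        rcases i with _ | i <;> rcases j with _ | j
        · rfl
        · exact absurd hij.symm (w3 j (by omega))
        · exact absurd hij (w3 i (by omega))
        · rw [v2 i (by omega) j (by omega) hij]
      · intro i hi
        rcases i with _ | i
        · exact hsymm _ _ w2
        · exact v3 i (by omega)
  obtain ⟨v, -, v2, v3⟩ := build ℓ le_rfl
  exact hno ⟨v, v2, v3⟩

theorem orient {n d : ℕ} (Adj : Fin n → Fin n → Prop) (hsymm : ∀ x y, Adj x y → Adj y x)
    (hirr : ∀ x, ¬ Adj x x)
    (hlow : ∀ S : Finset (Fin n), S.Nonempty →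
      ∃ v ∈ S, ∃ N : Finset (Fin n), N.card ≤ d ∧ ∀ u ∈ S, Adj v u → u ∈ N)
    (S : Finset (Fin n)) :
    ∃ out : Fin n → Finset (Fin n), (∀ v, (out v).card ≤ d) ∧
      ∀ u ∈ S, ∀ v ∈ S, Adj u v → u ∈ out v ∨ v ∈ out u := by
  classical
  induction S using Finset.strongInduction with
  | H S ih =>
    rcases S.eq_empty_or_nonempty with rfl | hS
    · exact ⟨fun _ => ∅, by simp, by simp⟩
    obtain ⟨v, hv, N, hN, hNv⟩ := hlow S hS
    obtain ⟨out, h1, h2⟩ := ih (S.erase v) (erase_ssubset hv)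
    refine ⟨Function.update out v N, ?_, ?_⟩
    · intro u
      by_cases h : u = v
      · subst h; simpa using hN
      · simpa [h] using h1 u
    · intro a ha b hb hab
      by_cases hav : a = v
      · subst hav
        right; simpa using hNv b hb hab
      by_cases hbv : b = v
      · subst hbv
        left; simpa using hNv a ha (hsymm _ _ hab)
      · simpa [hav, hbv] using h2 a (mem_erase.2 ⟨hav, ha⟩) b (mem_erase.2 ⟨hbv, hb⟩) hab

theorem count_stars {n k d t q : ℕ} (hn : 1 ≤ n) (hk : 4 ≤ k) (Adj : Fin n → Fin n → Prop)
    (hirr : ∀ x, ¬ Adj x x) (out : Fin n → Finset (Fin n))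
    (hout : ∀ v, (out v).card ≤ d) (hor : ∀ u v, Adj u v → u ∈ out v ∨ v ∈ out u)
    (hq : ∀ T : Finset (Fin n), T.card = t + 1 → ∃ N : Finset (Fin n), N.card ≤ q ∧
      ∀ y, (∀ c ∈ T, Adj c y) → y ∈ N)
    (G : Finset (Finset (Fin n))) (hG : ∀ A ∈ G, A.card = k)
    (hst : ∀ A ∈ G, ∃ c ∈ A, ∀ y ∈ A, y ≠ c → Adj c y) :
    G.card ≤ n.choose (k - 1) * t + (2 * (d * d) + 2 ^ d * 2 ^ q * d) * n ^ (k - 2) := by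
  classical
  have hq' : ∀ T : Finset (Fin n), ∃ N : Finset (Fin n), T.card = t + 1 → (N.card ≤ q ∧
      ∀ y, (∀ c ∈ T, Adj c y) → y ∈ N) := by
    intro T
    by_cases h : T.card = t + 1
    · obtain ⟨N, hN⟩ := hq T h
      exact ⟨N, fun _ => hN⟩
    · exact ⟨∅, fun h' => absurd h' h⟩
  choose N hN using hq'
  let up : Fin n → Fin n → Fin n → Finset (Finset (Fin n)) := fun a b c =>
    if ({a, b, c} : Finset (Fin n)).card = 3 then
      (powersetCard k (univ : Finset (Fin n))).filter (fun A => {a, b, c} ⊆ A) else ∅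
  have hup : ∀ a b c, (up a b c).card ≤ n ^ (k - 3) := by
    intro a b c
    simp only [up]
    split_ifs with h
    · exact card_up hn _ (by omega)
    · simp
  have hupm : ∀ A ∈ G, ∀ a ∈ A, ∀ b ∈ A, ∀ c ∈ A, a ≠ b → a ≠ c → b ≠ c → A ∈ up a b c := by
    intro A hA a ha b hb c hc h1 h2 h3
    have : ({a, b, c} : Finset (Fin n)).card = 3 := by rw [card_eq_three]; exact ⟨a, b, c, h1, h2, h3, rfl⟩
    simp only [up, this, if_true, mem_filter, mem_powersetCard, subset_univ, true_and]
    exact ⟨hG A hA, by simp [insert_subset_iff, ha, hb, hc]⟩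
  let C1 := (univ : Finset (Fin n)).biUnion fun c => (out c).biUnion fun y => (out c).biUnion fun z =>
    up c y z
  let C2 := (univ : Finset (Fin n)).biUnion fun z => (out z).biUnion fun c => (out c).biUnion fun y =>
    up c y z
  let cen : Finset (Fin n) → Finset (Fin n) := fun B =>
    univ.filter (fun c => ∀ y ∈ B, Adj c y ∧ c ∈ out y)
  let C3 := ((powersetCard (k - 1) (univ : Finset (Fin n))).filter (fun B => (cen B).card ≤ t)).biUnion
    fun B => (cen B).image (fun c => insert c B)
  let X := ((powersetCard (k - 1) (univ : Finset (Fin n))).filter (fun B => t < (cen B).card))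
  let C4 := X.biUnion fun B => (cen B).image (fun c => insert c B)
  have hpow : n * n ^ (k - 3) = n ^ (k - 2) := by
    rw [← pow_succ']; congr 1; omega
  have b1 : C1.card ≤ d * d * n ^ (k - 2) := by
    calc _ ≤ (univ : Finset (Fin n)).card * (d * (d * n ^ (k - 3))) := by
          refine card_biUnion_le_card_mul _ _ _ fun c _ => ?_
          refine (card_biUnion_le_card_mul _ _ (d * n ^ (k - 3)) fun y _ => ?_).trans
            (Nat.mul_le_mul_right _ (hout c))
          exact (card_biUnion_le_card_mul _ _ (n ^ (k - 3)) fun z _ => hup _ _ _).trans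
            (Nat.mul_le_mul_right _ (hout c))
      _ = d * d * (n * n ^ (k - 3)) := by simp; ring
      _ = _ := by rw [hpow]
  have b2 : C2.card ≤ d * d * n ^ (k - 2) := by
    calc _ ≤ (univ : Finset (Fin n)).card * (d * (d * n ^ (k - 3))) := by
          refine card_biUnion_le_card_mul _ _ _ fun c _ => ?_
          refine (card_biUnion_le_card_mul _ _ (d * n ^ (k - 3)) fun y _ => ?_).trans
            (Nat.mul_le_mul_right _ (hout c))
          exact (card_biUnion_le_card_mul _ _ (n ^ (k - 3)) fun z _ => hup _ _ _).trans
            (Nat.mul_le_mul_right _ (hout y))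
      _ = d * d * (n * n ^ (k - 3)) := by simp; ring
      _ = _ := by rw [hpow]
  have b3 : C3.card ≤ n.choose (k - 1) * t := by
    refine (card_biUnion_le_card_mul _ _ t fun B hB => ?_).trans (Nat.mul_le_mul_right _ ?_)
    · exact card_image_le.trans (mem_filter.1 hB).2
    · refine (card_filter_le _ _).trans ?_
      simp
  have hcen : ∀ B : Finset (Fin n), ∀ y ∈ B, cen B ⊆ out y := by
    intro B y hy c hc
    exact ((mem_filter.1 hc).2 y hy).2
  have bX : X.card ≤ n * (2 ^ d * 2 ^ q) := by
    have hX : X ⊆ (univ : Finset (Fin n)).biUnion fun y =>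
        ((out y).powerset.filter (fun T => T.card = t + 1)).biUnion fun T => (N T).powerset := by
      intro B hB
      simp only [X, mem_filter, mem_powersetCard, subset_univ, true_and] at hB
      obtain ⟨y, hy⟩ : B.Nonempty := by rw [← card_pos]; omega
      obtain ⟨T, hT, hTc⟩ := exists_subset_card_eq (show t + 1 ≤ (cen B).card from hB.2)
      simp only [mem_biUnion, mem_univ, true_and, mem_filter, mem_powerset]
      refine ⟨y, T, ⟨hT.trans (hcen B y hy), hTc⟩, ?_⟩
      intro z hz
      exact (hN T hTc).2 z (fun c hc => ((mem_filter.1 (hT hc)).2 z hz).1)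
    refine (card_le_card hX).trans ?_
    refine (card_biUnion_le_card_mul _ _ (2 ^ d * 2 ^ q) fun y _ => ?_).trans (by simp)
    refine (card_biUnion_le_card_mul _ _ (2 ^ q) fun T hT => ?_).trans (Nat.mul_le_mul_right _ ?_)
    · rw [card_powerset]
      exact Nat.pow_le_pow_right (by norm_num) (hN T (mem_filter.1 hT).2).1
    · refine (card_filter_le _ _).trans ?_
      rw [card_powerset]
      exact Nat.pow_le_pow_right (by norm_num) (hout y)
  have b4 : C4.card ≤ 2 ^ d * 2 ^ q * d * n ^ (k - 2) := by
    calc _ ≤ X.card * d := by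
          refine card_biUnion_le_card_mul _ _ d fun B hB => ?_
          refine card_image_le.trans ?_
          simp only [X, mem_filter, mem_powersetCard, subset_univ, true_and] at hB
          obtain ⟨y, hy⟩ : B.Nonempty := by rw [← card_pos]; omega
          exact (card_le_card (hcen B y hy)).trans (hout y)
      _ ≤ n * (2 ^ d * 2 ^ q) * d := Nat.mul_le_mul_right _ bX
      _ = 2 ^ d * 2 ^ q * d * n ^ 1 := by ring
      _ ≤ _ := Nat.mul_le_mul_left _ (Nat.pow_le_pow_right hn (by omega))
  have hsub : G ⊆ (C1 ∪ C2) ∪ (C3 ∪ C4) := by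
    intro A hA
    obtain ⟨c, hc, hcA⟩ := hst A hA
    by_cases hall : ∀ y ∈ A, y ≠ c → c ∈ out y
    · apply mem_union_right
      have hce : c ∈ cen (A.erase c) := by
        simp only [cen, mem_filter, mem_univ, true_and, mem_erase]
        exact fun y hy => ⟨hcA y hy.2 hy.1, hall y hy.2 hy.1⟩
      have hB : A.erase c ∈ powersetCard (k - 1) (univ : Finset (Fin n)) := by
        simp [mem_powersetCard, card_erase_of_mem hc, hG A hA]
      have hAi : A ∈ (cen (A.erase c)).image (fun x => insert x (A.erase c)) :=
        mem_image.2 ⟨c, hce, insert_erase hc⟩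
      rcases Nat.lt_or_ge t (cen (A.erase c)).card with h | h
      · exact mem_union_right _ (mem_biUnion.2 ⟨_, mem_filter.2 ⟨hB, h⟩, hAi⟩)
      · exact mem_union_left _ (mem_biUnion.2 ⟨_, mem_filter.2 ⟨hB, h⟩, hAi⟩)
    · apply mem_union_left
      push Not at hall
      obtain ⟨y, hy, hyc, hcy⟩ := hall
      have hyo : y ∈ out c := (hor c y (hcA y hy hyc)).resolve_left hcy
      obtain ⟨z, hz⟩ : (A \ {c, y}).Nonempty := by
        rw [← card_pos]
        have h1 := le_card_sdiff {c, y} A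
        have h2 : ({c, y} : Finset (Fin n)).card ≤ 2 := card_le_two
        rw [hG A hA] at h1
        omega
      simp only [mem_sdiff, mem_insert, mem_singleton, not_or] at hz
      obtain ⟨hzA, hzc, hzy⟩ := hz
      have hu := hupm A hA c hc y hy z hzA hyc.symm (Ne.symm hzc) (Ne.symm hzy)
      rcases hor c z (hcA z hzA hzc) with h | h
      · apply mem_union_right
        simp only [C2, mem_biUnion, mem_univ, true_and]
        exact ⟨z, c, h, y, hyo, hu⟩
      · apply mem_union_left
        simp only [C1, mem_biUnion, mem_univ, true_and]
        exact ⟨c, y, hyo, z, h, hu⟩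
  have e1 := card_le_card hsub
  have e2 := card_union_le (C1 ∪ C2) (C3 ∪ C4)
  have e3 := card_union_le C1 C2
  have e4 := card_union_le C3 C4
  have e5 : (2 * (d * d) + 2 ^ d * 2 ^ q * d) * n ^ (k - 2) =
    d * d * n ^ (k - 2) + d * d * n ^ (k - 2) + 2 ^ d * 2 ^ q * d * n ^ (k - 2) := by ring
  omega

theorem nat_bound (k ℓ t q : ℕ) (hk : 4 ≤ k) (hl : 1 ≤ ℓ) (hq : 1 ≤ q) :
    ∃ C : ℕ, ∀ n : ℕ, 1 ≤ n →
      ∀ F : Finset (Finset (Fin n)), (∀ A ∈ F, A.card = k) →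
        ¬ ContainsLinearPath k ℓ F →
        ¬ ContainsBlowup k (completeBipartiteGraph (Fin (t + 1)) (Fin q)) F →
        F.card ≤ n.choose (k - 1) * t + C * n ^ (k - 2) := by
  classical
  obtain ⟨s, hs⟩ : ∃ s, s = Fintype.card (Fin (t + 1) ⊕ Fin q) +
    k * Fintype.card (Sym2 (Fin (t + 1) ⊕ Fin q)) + ((ℓ + 1) + k * ℓ) := ⟨_, rfl⟩
  refine ⟨(2 * (ℓ * ℓ) + 2 ^ ℓ * 2 ^ q * ℓ) + ℓ * (k * (s ^ k * s ^ k)), ?_⟩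
  intro n hn F hF hP hK
  let Adj : Fin n → Fin n → Prop := fun x y => x ≠ y ∧ Ker s F {x, y}
  have hsymm : ∀ x y, Adj x y → Adj y x := fun x y h => ⟨h.1.symm, by
    have := h.2; rwa [pair_comm] at this⟩
  have hirr : ∀ x, ¬ Adj x x := fun x h => h.1 rfl
  have hno : ¬ ∃ v : ℕ → Fin n, (∀ i ≤ ℓ, ∀ j ≤ ℓ, v i = v j → i = j) ∧
      ∀ i < ℓ, Adj (v i) (v (i + 1)) := by
    rintro ⟨v, h1, h2⟩
    exact hP (path_of_ker (s := s) hk hF (by omega) v h1 (fun i hi => (h2 i hi).2))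
  obtain ⟨out, ho1, ho2⟩ := orient Adj hsymm hirr (low_degree Adj hsymm hno) univ
  let star : Finset (Fin n) → Prop := fun A => ∃ c ∈ A, ∀ y ∈ A, y ≠ c → Ker s F {c, y}
  have c1 := nonstar_small (s := s) (B := F.filter (fun A => ¬ star A)) hn (by omega) hk (by omega)
    hF (filter_subset _ _) (fun A hA => (mem_filter.1 hA).2) hP
  have c2 := count_stars (t := t) (q := q) hn hk Adj hirr out ho1
    (fun u v h => ho2 u (mem_univ _) v (mem_univ _) h) (by
      intro T hT
      refine ⟨univ.filter (fun y => ∀ c ∈ T, Adj c y), ?_, fun y hy => by simpa using hy⟩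
      by_contra hc
      push Not at hc
      obtain ⟨Y, hY, hYc⟩ := exists_subset_card_eq hc.le
      let f := T.equivFinOfCardEq hT
      let g := Y.equivFinOfCardEq hYc
      have hadj : ∀ a b, Adj (f.symm a) (g.symm b) := by
        intro a b
        have := hY (g.symm b).2
        exact (mem_filter.1 this).2 _ (f.symm a).2
      apply hK
      refine blowup_of_ker (s := s) _ hF (by omega)
        (Sum.elim (fun a => (f.symm a : Fin n)) (fun b => (g.symm b : Fin n))) ?_ ?_
      · apply Function.Injective.sumElim
        · exact Subtype.val_injective.comp f.symm.injective
        · exact Subtype.val_injective.comp g.symm.injective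
        · exact fun a b => (hadj a b).1
      · rintro (a | a) (b | b) hab
        · simp at hab
        · exact (hadj a b).2
        · exact (hsymm _ _ (hadj b a)).2
        · simp at hab)
    (F.filter star) (fun A hA => hF A (mem_filter.1 hA).1) (by
      intro A hA
      obtain ⟨c, hc, h⟩ := (mem_filter.1 hA).2
      exact ⟨c, hc, fun y hy hyc => ⟨hyc.symm, h y hy hyc⟩⟩)
  have c3 := card_filter_add_card_filter_not (s := F) star
  rw [add_mul, ← c3]
  have : ℓ * (k * (s ^ k * s ^ k)) * n ^ (k - 2) = ℓ * (k * (s ^ k * s ^ k) * n ^ (k - 2)) := by ring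
  omega

theorem turan_path_and_bipartite_blowup (k ℓ t q : ℕ) (hk : 4 ≤ k)
    (hl : 1 ≤ ℓ) (ht : 1 ≤ t) (hq : 1 ≤ q) :
    ∃ C : ℝ, 0 < C ∧ ∃ n₀ : ℕ, ∀ n : ℕ, n₀ ≤ n →
      ∀ F : Finset (Finset (Fin n)), (∀ A ∈ F, A.card = k) →
        ¬ ContainsLinearPath k ℓ F →
        ¬ ContainsBlowup k (completeBipartiteGraph (Fin (t + 1)) (Fin q)) F →
        (F.card : ℝ) ≤
          (t : ℝ) * ((n - 1).choose (k - 1)) + C * (n : ℝ) ^ ((k : ℝ) - 2 + 2 / ((k : ℝ) - 1)) := by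
  obtain ⟨C, hC⟩ := nat_bound k ℓ t q hk hl hq
  refine ⟨(C : ℝ) + t, by positivity, 1, ?_⟩
  intro n hn F hF hP hK
  have h1 := hC n hn F hF hP hK
  have h2 : n.choose (k - 1) ≤ (n - 1).choose (k - 1) + n ^ (k - 2) := by
    obtain ⟨m, rfl⟩ : ∃ m, n = m + 1 := ⟨n - 1, by omega⟩
    obtain ⟨j, rfl⟩ : ∃ j, k = j + 2 := ⟨k - 2, by omega⟩
    have e1 : j + 2 - 1 = j + 1 := by omega
    have e2 : j + 2 - 2 = j := by omega
    rw [e1, e2, Nat.choose_succ_succ', Nat.add_sub_cancel]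
    have : m.choose j ≤ (m + 1) ^ j :=
      (Nat.choose_le_pow m j).trans (Nat.pow_le_pow_left (by omega) j)
    omega
  have h3 : F.card ≤ t * (n - 1).choose (k - 1) + (C + t) * n ^ (k - 2) := by
    have := Nat.mul_le_mul_right t h2
    calc _ ≤ _ := h1
      _ ≤ ((n - 1).choose (k - 1) + n ^ (k - 2)) * t + C * n ^ (k - 2) := by omega
      _ = _ := by ring
  have h4 : ((n : ℝ) ^ (k - 2)) ≤ (n : ℝ) ^ ((k : ℝ) - 2 + 2 / ((k : ℝ) - 1)) := by
    rw [← Real.rpow_natCast]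
    apply Real.rpow_le_rpow_of_exponent_le (by exact_mod_cast hn)
    have hk' : (4 : ℝ) ≤ k := by exact_mod_cast hk
    rw [Nat.cast_sub (by omega)]
    have : 0 ≤ 2 / ((k : ℝ) - 1) := div_nonneg (by norm_num) (by linarith)
    push_cast
    linarith
  have h5 : (F.card : ℝ) ≤ t * ((n - 1).choose (k - 1)) + ((C : ℝ) + t) * (n : ℝ) ^ (k - 2) := by
    exact_mod_cast h3
  have h6 := mul_le_mul_of_nonneg_left h4 (by positivity : (0 : ℝ) ≤ (C : ℝ) + t)
  linarith
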